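/- arXiv:2002.11366 — 2 statements merged into one kernel-verified Lean document; each statement's English description precedes it below -/
import Mathlib

section
/- Let n be a positive integer with 5 ∣ n. Then the only positive integers x, y, z satisfying (35n² − 1)^x + (14n² + 1)^y = (7n)^z are (x, y, z) = (1, 1, 2). -/
lemma aux_fd (u γ : ℤ) (hγ : u ∣ γ - 1) (l k : ℕ) : ∀ j ξ : ℕ,
    u ^ (j - k) ∣ (fwdDiff (1:ℕ))^[j] (fun t : ℕ => (t:ℤ) ^ k * γ ^ (l * t)) ξ := by
  induction k with
  | zero =>
    have h1 : u ∣ γ ^ l - 1 := hγ.trans (by simpa using sub_dvd_pow_sub_pow γ 1 l)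
    have key : ∀ j : ℕ, (fwdDiff (1:ℕ))^[j] (fun t : ℕ => (t:ℤ) ^ 0 * γ ^ (l * t))
        = fun t => (γ ^ l - 1) ^ j * γ ^ (l * t) := by
      intro j
      induction j with
      | zero => simp
      | succ j ih =>
        rw [Function.iterate_succ_apply', ih]
        funext t
        simp only [fwdDiff]
        ring
    intro j ξ
    rw [key]
    exact Dvd.dvd.mul_right (by simpa using pow_dvd_pow_of_dvd h1 j) _
  | succ k ih =>
    have key : ∀ j : ℕ, (fwdDiff (1:ℕ))^[j] (fun t : ℕ => (t:ℤ) ^ (k+1) * γ ^ (l * t))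
        = fun t : ℕ => (t:ℤ) * (fwdDiff (1:ℕ))^[j] (fun t : ℕ => (t:ℤ) ^ k * γ ^ (l * t)) t
          + j * (fwdDiff (1:ℕ))^[j-1] (fun t : ℕ => (t:ℤ) ^ k * γ ^ (l * t)) (t+1) := by
      intro j
      induction j with
      | zero => funext t; simp; ring
      | succ j ih =>
        rw [Function.iterate_succ_apply', ih]
        funext t
        rw [Function.iterate_succ_apply']
        rcases j with _ | j
        · simp [fwdDiff]; ring
        · simp only [Nat.add_sub_cancel]
          rw [Function.iterate_succ_apply']
          simp only [fwdDiff]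
          push_cast
          ring
    intro j ξ
    rw [key]
    refine dvd_add (Dvd.dvd.mul_left ((pow_dvd_pow u (by omega)).trans (ih j ξ)) _)
      (Dvd.dvd.mul_left ?_ _)
    have := ih (j-1) (ξ+1)
    rwa [show j - 1 - k = j - (k+1) by omega] at this

/-- Siegel type lemma. -/
lemma aux_siegel (u : ℕ) (hu : 2 ≤ u) (γ : ℤ) (hγ : (u:ℤ) ∣ γ - 1) (K L T e : ℕ)
    (hcard : T * (T + K) < e * (K * L)) :
    ∃ p : Fin K × Fin L → ℤ, p ≠ 0 ∧ (∀ i, |p i| ≤ (u:ℤ) ^ e) ∧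
      ∀ ξ : ℕ, (u:ℤ) ^ T ∣ ∑ i : Fin K × Fin L, p i * ((ξ:ℤ) ^ (i.1:ℕ) * γ ^ ((i.2:ℕ) * ξ)) := by
  set d : Fin K × Fin L → ℕ → ℤ := fun i j =>
    (fwdDiff (1:ℕ))^[j] (fun t : ℕ => (t:ℤ) ^ (i.1:ℕ) * γ ^ ((i.2:ℕ) * t)) 0 with hd
  have : NeZero (u ^ T) := ⟨by positivity⟩
  let Φ : (Fin K × Fin L → Fin (u ^ e)) → (Fin (T + K) → ZMod (u ^ T)) := fun p j =>
    ((∑ i, ((p i : ℕ) : ℤ) * d i j : ℤ) : ZMod (u ^ T))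
  have hc : Fintype.card (Fin (T + K) → ZMod (u ^ T)) <
      Fintype.card (Fin K × Fin L → Fin (u ^ e)) := by
    simp only [Fintype.card_pi, ZMod.card, Finset.prod_const, Finset.card_univ, Fintype.card_fin,
      Fintype.card_prod]
    rw [← pow_mul, ← pow_mul]
    exact Nat.pow_lt_pow_right (by omega) hcard
  obtain ⟨p1, p2, hne, heq⟩ := Fintype.exists_ne_map_eq_of_card_lt Φ hc
  refine ⟨fun i => ((p1 i : ℕ) : ℤ) - ((p2 i : ℕ) : ℤ), ?_, ?_, ?_⟩
  · intro h
    apply hne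
    funext i
    have := congrFun h i
    simp only [Pi.zero_apply] at this
    apply Fin.ext
    omega
  · intro i
    have h1 := (p1 i).2
    have h2 := (p2 i).2
    have h1' : ((p1 i : ℕ) : ℤ) < (u:ℤ) ^ e := by exact_mod_cast h1
    have h2' : ((p2 i : ℕ) : ℤ) < (u:ℤ) ^ e := by exact_mod_cast h2
    rw [abs_le]
    constructor <;> simp only <;> omega
  · intro ξ
    have newton : ∀ i : Fin K × Fin L, (ξ:ℤ) ^ (i.1:ℕ) * γ ^ ((i.2:ℕ) * ξ) =
        ∑ j ∈ Finset.range (ξ+1), (ξ.choose j : ℤ) * d i j := by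
      intro i
      have := shift_eq_sum_fwdDiff_iter (1:ℕ)
        (fun t : ℕ => (t:ℤ) ^ (i.1:ℕ) * γ ^ ((i.2:ℕ) * t)) ξ 0
      simpa [hd] using this
    simp_rw [newton, Finset.mul_sum]
    rw [Finset.sum_comm]
    apply Finset.dvd_sum
    intro j _
    have : ∑ i : Fin K × Fin L, (((p1 i : ℕ) : ℤ) - ((p2 i : ℕ) : ℤ)) * ((ξ.choose j : ℤ) * d i j)
      = (ξ.choose j : ℤ) * ∑ i : Fin K × Fin L, (((p1 i : ℕ) : ℤ) - ((p2 i : ℕ) : ℤ)) * d i j := by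
      rw [Finset.mul_sum]
      exact Finset.sum_congr rfl fun i _ => by ring
    rw [this]
    apply Dvd.dvd.mul_left
    by_cases hj : j < T + K
    · have h := congrFun heq ⟨j, hj⟩
      simp only [Φ] at h
      rw [← sub_eq_zero, ← Int.cast_sub, ZMod.intCast_zmod_eq_zero_iff_dvd,
        ← Finset.sum_sub_distrib] at h
      push_cast at h
      simp_rw [← sub_mul] at h
      exact h
    · apply Finset.dvd_sum
      intro i _
      apply Dvd.dvd.mul_left
      refine (pow_dvd_pow (u:ℤ) ?_).trans (aux_fd u γ hγ i.2 i.1 j 0)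
      have := i.1.2
      omega

/-- common root of α and β modulo `u ^ T` -/
lemma aux_gamma (u T x y : ℕ) (hT : 0 < T) (hx : 0 < x) (hy : 0 < y) (hxy : Nat.Coprime x y)
    (α β : ℤ) (hα : (u:ℤ) ∣ α - 1) (hβ : (u:ℤ) ∣ β - 1)
    (h : (u:ℤ) ^ T ∣ β ^ y - α ^ x) :
    ∃ γ : ℤ, (u:ℤ) ∣ γ - 1 ∧ (u:ℤ) ^ T ∣ γ ^ y - α ∧ (u:ℤ) ^ T ∣ γ ^ x - β := by
  have hab : ∃ a b : ℕ, a * x = 1 + b * y := by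
    rcases Nat.lt_or_ge 1 y with h1 | h1
    · obtain ⟨a, ha⟩ := Nat.exists_mul_mod_eq_one_of_coprime hxy h1
      refine ⟨a, (x * a) / y, ?_⟩
      have := Nat.div_add_mod (x * a) y
      rw [ha.2] at this
      linarith [mul_comm y (x * a / y), mul_comm x a]
    · refine ⟨1, x - 1, ?_⟩
      have : y = 1 := by omega
      subst this
      omega
  obtain ⟨a, b, hab⟩ := hab
  have hcop : IsCoprime α ((u:ℤ) ^ T) := by
    apply IsCoprime.pow_right
    obtain ⟨c, hc⟩ := hα
    exact ⟨1, -c, by linear_combination hc⟩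
  obtain ⟨α', v, hv⟩ := hcop
  have hα' : (u:ℤ) ∣ α' - 1 := by
    have h1 : (u:ℤ) ∣ (u:ℤ)^T := dvd_pow_self _ (by omega)
    have : α' - 1 = -(α' * (α - 1)) - v * (u:ℤ)^T := by linear_combination hv
    rw [this]
    exact dvd_sub ((hα.mul_left _).neg_right) (h1.mul_left _)
  refine ⟨β ^ a * α' ^ b, ?_, ?_, ?_⟩
  · have e : ∀ (w : ℤ) (k : ℕ), (u:ℤ) ∣ w - 1 → (u:ℤ) ∣ w ^ k - 1 := fun w k hw =>
      hw.trans (by simpa using sub_dvd_pow_sub_pow w 1 k)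
    have e1 := e β a hβ
    have e2 := e α' b hα'
    have : β ^ a * α' ^ b - 1 = (β ^ a - 1) * α' ^ b + (α' ^ b - 1) := by ring
    rw [this]
    exact dvd_add (e1.mul_right _) e2
  all_goals
    have hm : ((u:ℤ)^T) = ((u^T : ℕ):ℤ) := by push_cast; rfl
    rw [hm] at h ⊢
    rw [← ZMod.intCast_zmod_eq_zero_iff_dvd] at h ⊢
    have hv' : ((α' * α + v * (u:ℤ)^T : ℤ) : ZMod (u^T)) = 1 := by rw [hv]; simp
    have hz : ((u:ZMod (u^T)))^T = 0 := by
      have := ZMod.natCast_self (u^T)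
      exact_mod_cast this
    push_cast at h hv' ⊢
    rw [hz, mul_zero, add_zero] at hv'
    rw [sub_eq_zero] at h ⊢
    set A : ZMod (u^T) := (α : ZMod (u^T))
    set A' : ZMod (u^T) := (α' : ZMod (u^T))
    set B : ZMod (u^T) := (β : ZMod (u^T))
  · calc (B ^ a * A' ^ b) ^ y = (B ^ y) ^ a * A' ^ (b * y) := by ring
      _ = A ^ (a * x) * A' ^ (b * y) := by rw [h]; ring
      _ = A * (A' * A) ^ (b * y) := by rw [hab]; ring
      _ = A := by rw [hv']; simp
  · calc (B ^ a * A' ^ b) ^ x = B ^ (a * x) * A' ^ (b * x) := by ring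
      _ = B * (B ^ y) ^ b * A' ^ (b * x) := by rw [hab]; ring
      _ = B * (A' * A) ^ (b * x) := by rw [h]; ring
      _ = B := by rw [hv']; simp

open Polynomial in
lemma aux_coeff_prod {ι : Type*} (s : Finset ι) (g : ι → ℤ[X]) (d : ι → ℕ)
    (h : ∀ j ∈ s, (g j).natDegree ≤ d j) :
    (∏ j ∈ s, g j).coeff (∑ j ∈ s, d j) = ∏ j ∈ s, (g j).coeff (d j) := by
  classical
  induction s using Finset.induction_on with
  | empty => simp
  | insert a s ha ih =>
    rw [Finset.prod_insert ha, Finset.sum_insert ha, Finset.prod_insert ha,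
      ← ih fun j hj => h j (Finset.mem_insert_of_mem hj)]
    apply coeff_mul_add_eq_of_natDegree_le (h a (Finset.mem_insert_self a s))
    exact (natDegree_prod_le _ _).trans
      (Finset.sum_le_sum fun j hj => h j (Finset.mem_insert_of_mem hj))

open Polynomial in
/-- zero estimate -/
lemma aux_zero (m K : ℕ) (y α : ℤ) (hα : 2 ≤ |α|) (f : Fin m → ℕ)
    (hf : Function.Injective f) (P : Fin m → ℤ[X]) (hP : ∀ j, P j ≠ 0)
    (hdeg : ∀ j, (P j).natDegree ≤ K) (hm : 0 < m) (S : Finset ℤ)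
    (hS : ∀ ξ ∈ S, ∃ η : ℤ, η ≠ 0 ∧ ∀ i : Fin m,
      ∑ j, (P j).eval (ξ + (i:ℕ) * y) * (α ^ (i:ℕ) * η) ^ f j = 0) :
    S.card ≤ m * K := by
  set M : Matrix (Fin m) (Fin m) ℤ[X] := fun i j =>
    (P j).comp (X + C ((i:ℕ) * y)) * C (α ^ ((i:ℕ) * f j)) with hM
  have hMdeg : ∀ i j, (M i j).natDegree ≤ (P j).natDegree := by
    intro i j
    simp only [hM]
    refine (natDegree_mul_C_le _ _).trans ?_
    rw [natDegree_comp, natDegree_X_add_C, mul_one]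
  have hMcoeff : ∀ i j, (M i j).coeff (P j).natDegree =
      (P j).leadingCoeff * (α ^ f j) ^ (i:ℕ) := by
    intro i j
    simp only [hM]
    rw [coeff_mul_C]
    congr 1
    · have := coeff_comp_degree_mul_degree (p := P j) (q := X + C (((i:ℕ):ℤ) * y))
        (by rw [natDegree_X_add_C]; simp)
      rw [natDegree_X_add_C, mul_one, leadingCoeff_X_add_C, one_pow, mul_one] at this
      exact this
    · rw [← pow_mul, mul_comm]
  have hco : M.det.coeff (∑ j, (P j).natDegree) =
      (∏ j, (P j).leadingCoeff) * (Matrix.vandermonde (fun j => α ^ f j)).det := by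
    rw [Matrix.det_apply, finsetSum_coeff, ← Matrix.det_transpose, Matrix.det_apply,
      Finset.mul_sum]
    apply Finset.sum_congr rfl
    intro σ _
    rw [coeff_smul, aux_coeff_prod _ _ _ (fun j _ => hMdeg _ _)]
    simp_rw [hMcoeff, Finset.prod_mul_distrib, Matrix.transpose_apply, Matrix.vandermonde_apply]
    rw [mul_smul_comm]
  have hdet : M.det ≠ 0 := by
    intro h0
    rw [h0, coeff_zero] at hco
    rcases mul_eq_zero.mp hco.symm with h1 | h1
    · rw [Finset.prod_eq_zero_iff] at h1
      obtain ⟨j, _, hj⟩ := h1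
      exact hP j (leadingCoeff_eq_zero.mp hj)
    · rw [Matrix.det_vandermonde_eq_zero_iff] at h1
      obtain ⟨i, j, hij, hne⟩ := h1
      apply hne
      apply hf
      have h2 : |α| ^ f i = |α| ^ f j := by rw [← abs_pow, ← abs_pow, hij]
      exact pow_right_injective₀ (by linarith) (by linarith) h2
  have hnd : M.det.natDegree ≤ m * K := by
    rw [Matrix.det_apply]
    apply natDegree_sum_le_of_forall_le
    intro σ _
    refine (natDegree_smul_le _ _).trans ((natDegree_prod_le _ _).trans ?_)
    calc _ ≤ ∑ j : Fin m, K := Finset.sum_le_sum fun j _ => (hMdeg _ _).trans (hdeg j)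
      _ = _ := by simp
  refine le_trans ?_ hnd
  apply Polynomial.card_le_degree_of_subset_roots
  intro ξ hξ
  rw [Polynomial.mem_roots hdet]
  obtain ⟨η, hη, h⟩ := hS ξ hξ
  show eval ξ M.det = 0
  have : eval ξ M.det = (M.map (eval ξ)).det := by
    have := RingHom.map_det (evalRingHom ξ) M
    simpa using this
  rw [this, ← Matrix.exists_mulVec_eq_zero_iff]
  refine ⟨fun j => η ^ f j, ?_, ?_⟩
  · intro h0
    have := congrFun h0 ⟨0, hm⟩
    exact pow_ne_zero _ hη this
  · funext i
    rw [Pi.zero_apply, ← h i]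
    simp only [Matrix.mulVec, dotProduct]
    apply Finset.sum_congr rfl
    intro j _
    rw [Matrix.map_apply]
    simp only [hM, eval_mul, eval_comp, eval_add, eval_X, eval_C]
    rw [mul_pow, ← pow_mul]
    ring

open Polynomial in
lemma aux_zero2 (L M K x y : ℕ) (hL : 0 < L) (hK : 0 < K) (hM : L * (K - 1) < M * M)
    (hxy : Nat.Coprime x y) (hmax : M ≤ x ∨ M ≤ y) (α β : ℤ) (hα : 2 ≤ |α|) (hβ : β ≠ 0)
    (p : Fin K × Fin L → ℤ) (hp : p ≠ 0)
    (h0 : ∀ r s : ℕ, r < L + M → s < M →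
      ∑ i : Fin K × Fin L, p i * (((r * y + s * x : ℕ) : ℤ) ^ (i.1:ℕ) *
        (α ^ r * β ^ s) ^ (i.2:ℕ)) = 0) : False := by
  classical
  set sup : Finset (Fin L) := Finset.univ.filter fun l => ∃ k, p (k, l) ≠ 0 with hsup
  have hsupne : 0 < sup.card := by
    rw [Finset.card_pos]
    by_contra hne
    apply hp
    funext ⟨k, l⟩
    by_contra hkl
    exact hne ⟨l, by rw [hsup, Finset.mem_filter]; exact ⟨Finset.mem_univ _, k, hkl⟩⟩
  have hsupL : sup.card ≤ L := by simpa using Finset.card_le_univ sup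
  set m := sup.card with hm
  let e := sup.equivFin.symm
  let f : Fin m → ℕ := fun j => ((e j : Fin L) : ℕ)
  let P : Fin m → ℤ[X] := fun j => ∑ k : Fin K, C (p (k, (e j : Fin L))) * X ^ (k:ℕ)
  have hPco : ∀ j (k : Fin K), (P j).coeff k = p (k, (e j : Fin L)) := by
    intro j k
    simp only [P, finsetSum_coeff, coeff_C_mul, coeff_X_pow]
    rw [Finset.sum_eq_single k]
    · simp
    · intro b _ hb
      rw [if_neg (fun h => hb (Fin.ext h.symm))]
      simp
    · simp
  let S : Finset ℤ := (Finset.range M ×ˢ Finset.range M).image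
    fun rs => ((rs.1 * y + rs.2 * x : ℕ) : ℤ)
  have hScard : S.card = M * M := by
    rw [Finset.card_image_of_injOn]
    · simp
    · rintro ⟨r, s⟩ hrs ⟨r', s'⟩ hrs' heq
      simp only [Finset.coe_product, Finset.coe_range, Set.mem_prod, Set.mem_Iio] at hrs hrs'
      have heq' : r * y + s * x = r' * y + s' * x := by
        simp only at heq
        exact_mod_cast heq
      have hZ : ((r:ℤ) - r') * y = (s' - s) * x := by
        have : (r:ℤ) * y + s * x = r' * y + s' * x := by exact_mod_cast heq'
        linear_combination this
      have hcop : IsCoprime (x:ℤ) (y:ℤ) := Nat.isCoprime_iff_coprime.mpr hxy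
      have d1 : (x:ℤ) ∣ (r:ℤ) - r' := hcop.dvd_of_dvd_mul_right ⟨s' - s, by rw [hZ]; ring⟩
      have d2 : (y:ℤ) ∣ (s':ℤ) - s := hcop.symm.dvd_of_dvd_mul_right ⟨r - r', by rw [← hZ]; ring⟩
      have hx0 : 0 < M := by omega
      rcases hmax with hx | hy
      · have h1 : (r:ℤ) - r' = 0 := Int.eq_zero_of_abs_lt_dvd d1 (by rw [abs_lt]; omega)
        rw [h1, zero_mul] at hZ
        have h2 : (s':ℤ) - s = 0 := by
          rcases mul_eq_zero.mp hZ.symm with h | h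
          · exact h
          · omega
        ext <;> simp only <;> omega
      · have h1 : (s':ℤ) - s = 0 := Int.eq_zero_of_abs_lt_dvd d2 (by rw [abs_lt]; omega)
        rw [h1, zero_mul] at hZ
        have h2 : (r:ℤ) - r' = 0 := by
          rcases mul_eq_zero.mp hZ with h | h
          · exact h
          · omega
        ext <;> simp only <;> omega
  have hα0 : α ≠ 0 := by rintro rfl; simp at hα
  have hbound : S.card ≤ m * (K - 1) := by
    refine aux_zero m (K - 1) y α hα f ?_ P ?_ ?_ hsupne S ?_
    · intro i j hij
      exact e.injective (Subtype.ext (Fin.ext hij))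
    · intro j hj
      obtain ⟨k, hk⟩ := (Finset.mem_filter.mp (e j).2).2
      apply hk
      rw [← hPco j k, hj, coeff_zero]
    · intro j
      apply natDegree_sum_le_of_forall_le
      intro k _
      refine (natDegree_C_mul_X_pow_le _ _).trans ?_
      have := k.2
      omega
    · intro ξ hξ
      simp only [S, Finset.mem_image, Finset.mem_product, Finset.mem_range] at hξ
      obtain ⟨⟨r, s⟩, ⟨hr, hs⟩, rfl⟩ := hξ
      refine ⟨α ^ r * β ^ s, mul_ne_zero (pow_ne_zero _ hα0) (pow_ne_zero _ hβ), ?_⟩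
      intro i
      have hi := i.2
      have h1 := h0 (r + i) s (by simp only at hr; omega) hs
      rw [Fintype.sum_prod_type, Finset.sum_comm] at h1
      rw [← h1]
      have h2 : ∀ l : Fin L, l ∉ sup → ∑ k : Fin K, p (k, l) *
          ((((r + i) * y + s * x : ℕ) : ℤ) ^ (k:ℕ) * (α ^ (r + (i:ℕ)) * β ^ s) ^ (l:ℕ)) = 0 := by
        intro l hl
        apply Finset.sum_eq_zero
        intro k _
        have : p (k, l) = 0 := by
          by_contra hkl
          exact hl (by rw [hsup, Finset.mem_filter]; exact ⟨Finset.mem_univ _, k, hkl⟩)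
        rw [this, zero_mul]
      simp only
      rw [← Finset.sum_subset (Finset.subset_univ sup) (fun l _ hl => h2 l hl),
        ← Finset.sum_coe_sort sup (fun l => ∑ k : Fin K, p (k, l) *
          ((((r + i) * y + s * x : ℕ) : ℤ) ^ (k:ℕ) * (α ^ (r + (i:ℕ)) * β ^ s) ^ (l:ℕ))),
        ← Equiv.sum_comp e (fun l : sup => ∑ k : Fin K, p (k, (l : Fin L)) *
          ((((r + i) * y + s * x : ℕ) : ℤ) ^ (k:ℕ) * (α ^ (r + (i:ℕ)) * β ^ s) ^ ((l : Fin L):ℕ)))]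
      apply Finset.sum_congr rfl
      intro j _
      simp only [P, f, eval_finsetSum, eval_mul, eval_C, eval_pow, eval_X]
      rw [Finset.sum_mul]
      apply Finset.sum_congr rfl
      intro k _
      push_cast
      ring
  have : m * (K - 1) ≤ L * (K - 1) := Nat.mul_le_mul_right _ hsupL
  omega

lemma aux_main (u x y z q L : ℕ) (hu : 175 ≤ u) (hL : L = 9 * (q + 1)) (hx : 0 < x) (hy : 0 < y)
    (hxy : Nat.Coprime x y) (hxz : x ≤ z) (hyz : y ≤ z) (hz : 576 * L ^ 2 ≤ z)
    (hzq : z ^ 2 ≤ u ^ q) (hmax : 24 * L ≤ x ∨ 24 * L ≤ y)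
    (hdvd : (u:ℤ) ^ (288 * L ^ 2) ∣ (1 + 2 * (u:ℤ)) ^ y - (1 - 5 * (u:ℤ)) ^ x) : False := by
  have hL0 : 0 < L := by omega
  set α : ℤ := 1 - 5 * (u:ℤ) with hα
  set β : ℤ := 1 + 2 * (u:ℤ) with hβ
  set T := 288 * L ^ 2 with hT
  have huZ : (175:ℤ) ≤ u := by exact_mod_cast hu
  have hαa : |α| = 5 * (u:ℤ) - 1 := by rw [abs_of_neg (by linarith)]; ring
  obtain ⟨γ, hγ, hγα, hγβ⟩ := aux_gamma u T x y (by positivity) hx hy hxy α β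
    ⟨-5, by rw [hα]; ring⟩ ⟨2, by rw [hβ]; ring⟩ hdvd
  obtain ⟨p, hp0, hpb, hpd⟩ := aux_siegel u (by omega) γ hγ (576 * L) L T
    (144 * L ^ 2 + 288 * L + 1) (by rw [hT]; nlinarith [pow_pos hL0 2])
  refine aux_zero2 L (24 * L) (576 * L) x y hL0 (by omega) ?_ hxy hmax α β (by rw [hαa]; linarith)
    (by rw [hβ]; positivity) p hp0 ?_
  · have : L * (576 * L - 1) < L * (576 * L) := Nat.mul_lt_mul_of_pos_left (by omega) hL0
    nlinarith
  intro r s hr hs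
  apply Int.eq_zero_of_abs_lt_dvd (m := (u:ℤ) ^ T)
  · have hmod : ∀ i : Fin (576 * L) × Fin L, (u:ℤ) ^ T ∣
        γ ^ ((i.2:ℕ) * (r * y + s * x)) - (α ^ r * β ^ s) ^ (i.2:ℕ) := by
      intro i
      have e1 : (u:ℤ) ^ T ∣ (γ ^ y) ^ r - α ^ r := hγα.trans (sub_dvd_pow_sub_pow _ _ r)
      have e2 : (u:ℤ) ^ T ∣ (γ ^ x) ^ s - β ^ s := hγβ.trans (sub_dvd_pow_sub_pow _ _ s)
      have e3 : (u:ℤ) ^ T ∣ (γ ^ y) ^ r * (γ ^ x) ^ s - α ^ r * β ^ s := by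
        have : (γ ^ y) ^ r * (γ ^ x) ^ s - α ^ r * β ^ s =
          ((γ ^ y) ^ r - α ^ r) * (γ ^ x) ^ s + α ^ r * ((γ ^ x) ^ s - β ^ s) := by ring
        rw [this]
        exact dvd_add (e1.mul_right _) (e2.mul_left _)
      have e4 := e3.trans (sub_dvd_pow_sub_pow _ _ (i.2:ℕ))
      have : γ ^ ((i.2:ℕ) * (r * y + s * x)) = ((γ ^ y) ^ r * (γ ^ x) ^ s) ^ (i.2:ℕ) := by ring
      rw [this]
      exact e4
    have h1 := hpd (r * y + s * x)
    have : ∑ i : Fin (576 * L) × Fin L, p i * (((r * y + s * x : ℕ) : ℤ) ^ (i.1:ℕ) *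
        (α ^ r * β ^ s) ^ (i.2:ℕ)) =
      ∑ i : Fin (576 * L) × Fin L, p i * (((r * y + s * x : ℕ) : ℤ) ^ (i.1:ℕ) *
        γ ^ ((i.2:ℕ) * (r * y + s * x))) -
      ∑ i : Fin (576 * L) × Fin L, p i * ((r * y + s * x : ℕ) : ℤ) ^ (i.1:ℕ) *
        (γ ^ ((i.2:ℕ) * (r * y + s * x)) - (α ^ r * β ^ s) ^ (i.2:ℕ)) := by
      rw [← Finset.sum_sub_distrib]
      exact Finset.sum_congr rfl fun i _ => by ring
    rw [this]
    exact dvd_sub h1 (Finset.dvd_sum fun i _ => (hmod i).mul_left _)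
  · have hu1 : (1:ℤ) ≤ u := by linarith
    have hξ : ((r * y + s * x : ℕ) : ℤ) ≤ (u:ℤ) ^ q := by
      have h1 : r * y + s * x ≤ z ^ 2 := by
        have a1 : r * y ≤ (L + 24 * L) * z := Nat.mul_le_mul hr.le hyz
        have a2 : s * x ≤ (24 * L) * z := Nat.mul_le_mul hs.le hxz
        have a3 : 49 * L * z ≤ z * z := Nat.mul_le_mul_right _ (by nlinarith)
        nlinarith
      exact_mod_cast h1.trans hzq
    have hη : |α ^ r * β ^ s| ≤ (u:ℤ) ^ (74 * L) := by
      have hβ1 : (1:ℤ) ≤ β := by rw [hβ]; linarith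
      have hα1 : (1:ℤ) ≤ |α| := by rw [hαa]; linarith
      rw [abs_mul, abs_pow, abs_pow, abs_of_pos (by linarith : (0:ℤ) < β)]
      calc |α| ^ r * β ^ s ≤ |α| ^ (L + 24 * L) * β ^ (24 * L) :=
            mul_le_mul (pow_le_pow_right₀ hα1 hr.le) (pow_le_pow_right₀ hβ1 hs.le)
              (by positivity) (by positivity)
        _ = |α| ^ L * (|α| * β) ^ (24 * L) := by rw [mul_pow, pow_add]; ring
        _ ≤ ((u:ℤ) ^ 2) ^ L * ((u:ℤ) ^ 3) ^ (24 * L) := by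
            apply mul_le_mul
            · apply pow_le_pow_left₀ (by positivity)
              rw [hαa]; nlinarith
            · apply pow_le_pow_left₀ (by positivity)
              rw [hαa, hβ]; nlinarith [mul_le_mul huZ huZ (by norm_num) (by linarith), sq_nonneg (u:ℤ)]
            · positivity
            · positivity
        _ = (u:ℤ) ^ (74 * L) := by rw [← pow_mul, ← pow_mul, ← pow_add]; congr 1; ring
    have hterm : ∀ i : Fin (576 * L) × Fin L, |p i * (((r * y + s * x : ℕ) : ℤ) ^ (i.1:ℕ) *
        (α ^ r * β ^ s) ^ (i.2:ℕ))| ≤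
        (u:ℤ) ^ (144 * L ^ 2 + 288 * L + 1 + q * (576 * L - 1) + 74 * L * L) := by
      intro i
      have h1 := i.1.2
      have h2 := i.2.2
      rw [abs_mul, abs_mul, abs_pow, abs_pow, pow_add, pow_add, mul_assoc]
      apply mul_le_mul (hpb i) _ (by positivity) (by positivity)
      apply mul_le_mul _ _ (by positivity) (by positivity)
      · rw [Nat.abs_cast, pow_mul]
        calc ((r * y + s * x : ℕ) : ℤ) ^ (i.1:ℕ) ≤ ((u:ℤ) ^ q) ^ (i.1:ℕ) :=
              pow_le_pow_left₀ (by positivity) hξ _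
          _ ≤ _ := pow_le_pow_right₀ (one_le_pow₀ hu1) (by omega)
      · rw [pow_mul (u:ℤ) (74 * L) L]
        calc |α ^ r * β ^ s| ^ (i.2:ℕ) ≤ ((u:ℤ) ^ (74 * L)) ^ (i.2:ℕ) :=
              pow_le_pow_left₀ (by positivity) hη _
          _ ≤ _ := pow_le_pow_right₀ (one_le_pow₀ hu1) (by omega)
    have hKL : ((576 * L * L : ℕ) : ℤ) ≤ (u:ℤ) ^ q := by
      have : 576 * L * L ≤ z ^ 2 := by nlinarith
      exact_mod_cast this.trans hzq
    calc _ ≤ ∑ i : Fin (576 * L) × Fin L, |p i * (((r * y + s * x : ℕ) : ℤ) ^ (i.1:ℕ) *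
        (α ^ r * β ^ s) ^ (i.2:ℕ))| := Finset.abs_sum_le_sum_abs _ _
      _ ≤ ∑ i : Fin (576 * L) × Fin L,
        (u:ℤ) ^ (144 * L ^ 2 + 288 * L + 1 + q * (576 * L - 1) + 74 * L * L) :=
          Finset.sum_le_sum fun i _ => hterm i
      _ = ((576 * L * L : ℕ) : ℤ) *
        (u:ℤ) ^ (144 * L ^ 2 + 288 * L + 1 + q * (576 * L - 1) + 74 * L * L) := by
          simp
      _ ≤ (u:ℤ) ^ q *
        (u:ℤ) ^ (144 * L ^ 2 + 288 * L + 1 + q * (576 * L - 1) + 74 * L * L) :=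
          mul_le_mul_of_nonneg_right hKL (by positivity)
      _ = (u:ℤ) ^ (144 * L ^ 2 + 288 * L + 1 + q * (576 * L) + 74 * L * L) := by
          rw [← pow_add]
          congr 1
          obtain ⟨w, hw⟩ : ∃ w, 576 * L = w + 1 := ⟨576 * L - 1, by omega⟩
          rw [hw, Nat.add_sub_cancel]
          ring
      _ < (u:ℤ) ^ T := by
          apply pow_lt_pow_right₀ (by linarith)
          rw [hT, hL]
          nlinarith

/-- Entries `(n, k, a, b)`: multiplicative relations between `1 + 2 * u` and `1 - 5 * u`. -/
def relTable : List (ℕ × ℕ × ℕ × ℕ) := [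
  (5, 11, 34126815, 1201051), (15, 8, 1275795, 411093), (25, 8, 10741160, 1019589),
  (35, 8, 30654200, 29368805), (45, 7, 850305, 4209897), (55, 7, 2858510, 4552579),
  (65, 7, 4731865, 7482421), (75, 7, 6102910, 14293039), (85, 7, 7333070, 24528753),
  (95, 7, 20531860, 9539419), (105, 7, 213775145, 42832283), (115, 7, 34715570, 21014503),
  (125, 7, 30077800, 61796745), (135, 7, 56132935, 34062499), (145, 7, 64020980, 55484917),
  (155, 6, 1345395, 1715383), (165, 7, 121968125, 15436625), (175, 6, 5788130, 814627),
  (185, 7, 165306835, 37613309), (195, 6, 2129395, 2714983), (205, 6, 4412620, 3824273),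
  (215, 6, 4853620, 4206473), (225, 6, 2834995, 3614623), (235, 6, 386535, 21802814),
  (245, 6, 11344730, 1596667), (255, 6, 455135, 25671854), (265, 5, 12985, 5194),
  (275, 5, 13475, 5390), (285, 5, 13965, 5586), (295, 5, 14455, 5782), (305, 5, 14945, 5978),
  (315, 5, 15435, 6174), (325, 5, 15925, 6370), (335, 5, 16415, 6566), (345, 5, 16905, 6762),
  (355, 5, 17395, 6958), (365, 5, 17885, 7154), (375, 5, 18375, 7350), (385, 5, 18865, 7546),
  (395, 5, 19355, 7742), (405, 5, 19845, 7938), (415, 5, 20335, 8134), (425, 5, 20825, 8330),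
  (435, 5, 21315, 8526), (445, 5, 21805, 8722), (455, 5, 22295, 8918), (465, 5, 22785, 9114),
  (475, 5, 23275, 9310), (485, 5, 23765, 9506), (495, 5, 24255, 9702), (505, 5, 24745, 9898),
  (515, 5, 25235, 10094), (525, 5, 25725, 10290), (535, 5, 26215, 10486), (545, 5, 26705, 10682),
  (555, 5, 27195, 10878), (565, 5, 27685, 11074), (575, 4, 35, 14), (585, 4, 35, 14),
  (595, 4, 35, 14), (605, 4, 35, 14), (615, 4, 35, 14), (625, 4, 35, 14), (635, 4, 35, 14),
  (645, 4, 35, 14), (655, 4, 35, 14), (665, 4, 35, 14), (675, 4, 35, 14), (685, 4, 35, 14),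
  (695, 4, 35, 14), (705, 4, 35, 14), (715, 4, 35, 14), (725, 4, 35, 14), (735, 4, 35, 14),
  (745, 4, 35, 14), (755, 4, 35, 14), (765, 4, 35, 14), (775, 4, 35, 14), (785, 4, 35, 14),
  (795, 4, 35, 14), (805, 4, 35, 14), (815, 4, 35, 14), (825, 4, 35, 14), (835, 4, 35, 14),
  (845, 4, 35, 14), (855, 4, 35, 14), (865, 4, 35, 14), (875, 4, 35, 14), (885, 4, 35, 14),
  (895, 4, 35, 14), (905, 4, 35, 14), (915, 4, 35, 14), (925, 4, 35, 14), (935, 4, 35, 14),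
  (945, 4, 35, 14), (955, 4, 35, 14), (965, 4, 35, 14), (975, 4, 35, 14), (985, 4, 35, 14),
  (995, 4, 35, 14), (1005, 4, 35, 14), (1015, 4, 35, 14), (1025, 4, 35, 14), (1035, 4, 35, 14),
  (1045, 4, 35, 14), (1055, 4, 35, 14), (1065, 4, 35, 14), (1075, 4, 35, 14), (1085, 4, 35, 14),
  (1095, 4, 35, 14), (1105, 4, 35, 14), (1115, 4, 35, 14), (1125, 4, 35, 14), (1135, 4, 35, 14),
  (1145, 4, 35, 14), (1155, 4, 35, 14), (1165, 4, 35, 14), (1175, 4, 35, 14), (1185, 4, 35, 14),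
  (1195, 4, 35, 14), (1205, 4, 35, 14), (1215, 4, 35, 14), (1225, 4, 35, 14), (1235, 4, 35, 14),
  (1245, 4, 35, 14), (1255, 4, 35, 14), (1265, 4, 35, 14), (1275, 4, 35, 14), (1285, 4, 35, 14),
  (1295, 4, 35, 14), (1305, 4, 35, 14), (1315, 4, 35, 14), (1325, 4, 35, 14), (1335, 4, 35, 14),
  (1345, 4, 35, 14), (1355, 4, 35, 14), (1365, 4, 35, 14), (1375, 4, 35, 14), (1385, 4, 35, 14),
  (1395, 4, 35, 14), (1405, 4, 35, 14), (1415, 4, 35, 14), (1425, 4, 35, 14), (1435, 4, 35, 14),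
  (1445, 4, 35, 14), (1455, 4, 35, 14), (1465, 4, 35, 14), (1475, 4, 35, 14), (1485, 4, 35, 14),
  (1495, 4, 35, 14), (1505, 4, 35, 14)]

def powModAux : ℕ → ℕ → ℕ → ℕ → ℕ
  | 0, _, _, _ => 1
  | f + 1, b, e, M =>
    if e % 2 = 1 then b * powModAux f (b * b % M) (e / 2) M % M
    else powModAux f (b * b % M) (e / 2) M

def relCheck (t : ℕ × ℕ × ℕ × ℕ) : Bool :=
  let M := (7 * t.1) ^ t.2.1
  decide (powModAux 32 (1 + 14 * t.1 ^ 2) t.2.2.1 M *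
      powModAux 32 (M + 1 - 35 * t.1 ^ 2) t.2.2.2 M % M = 1) &&
    decide (t.2.2.1 < 2 ^ 32) && decide (t.2.2.2 < 2 ^ 32) && decide (35 * t.1 ^ 2 ≤ M) &&
    decide (0 < t.2.2.1 + t.2.2.2) && decide (t.2.1 ≤ 11) &&
    decide (7 * t.1 ^ 2 * ((t.2.2.1 + t.2.2.2) * 2286144) < M) && decide (1 < M)

lemma relTable_check : ∀ t ∈ relTable, relCheck t = true := by
  decide +kernel

lemma relTable_mem : ∀ m < 151, ∃ t ∈ relTable, t.1 = 10 * m + 5 := by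
  decide +kernel

lemma powModAux_spec (f : ℕ) : ∀ b e M : ℕ, e < 2 ^ f → powModAux f b e M ≡ b ^ e [MOD M] := by
  induction f with
  | zero =>
    intro b e M he
    have : e = 0 := by simpa using he
    subst this
    exact Nat.ModEq.refl _
  | succ f ih =>
    intro b e M he
    have h1 := ih (b * b % M) (e / 2) M (by rw [pow_succ] at he; omega)
    have h2 : (b * b % M) ^ (e / 2) ≡ (b * b) ^ (e / 2) [MOD M] :=
      Nat.ModEq.pow _ (Nat.mod_modEq _ _)
    have h3 := h1.trans h2
    have hdm := Nat.div_add_mod e 2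
    unfold powModAux
    split_ifs with hp
    · refine (Nat.mod_modEq _ _).trans ?_
      have : b ^ e = b * (b * b) ^ (e / 2) := by
        rw [← pow_two, ← pow_mul, ← pow_succ']
        congr 1
        omega
      rw [this]
      exact h3.mul_left _
    · have : b ^ e = (b * b) ^ (e / 2) := by
        rw [← pow_two, ← pow_mul]
        congr 1
        omega
      rw [this]
      exact h3

/-- Lifting the exponent, packaged for the modulus `C ^ k`. -/
lemma aux_lte (n k e : ℕ) (hn : ¬ 2 ∣ n)
    (h : (7 * n) ^ k ∣ (1 + 14 * n ^ 2) ^ e - 1) : (7 * n) ^ k ∣ 7 * n ^ 2 * e := by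
  rw [Nat.dvd_iff_prime_pow_dvd_dvd]
  intro p j hp hj
  rcases Nat.eq_zero_or_pos j with rfl | hj0
  · simp
  have hpC : p ∣ 7 * n := hp.dvd_of_dvd_pow ((dvd_pow_self p (by omega)).trans hj)
  have hpu : p ∣ 7 * n ^ 2 := hpC.trans ⟨n, by ring⟩
  have hp2 : ¬ 2 ∣ p := by
    intro h2
    rcases (Nat.Prime.dvd_mul Nat.prime_two).mp (h2.trans hpC) with h | h
    · omega
    · exact hn h
  have hodd : Odd p := by rw [← Nat.not_even_iff_odd, even_iff_two_dvd]; exact hp2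
  have hb : ¬ p ∣ 1 + 14 * n ^ 2 := by
    intro hb
    have : p ∣ 1 := by
      have h3 : p ∣ 14 * n ^ 2 := hpu.trans ⟨2, by ring⟩
      exact (Nat.dvd_add_left h3).mp hb
    exact hp.one_lt.ne' (Nat.dvd_one.mp this)
  have hl := Nat.emultiplicity_pow_sub_pow hp hodd (x := 1 + 14 * n ^ 2) (y := 1)
    (by simpa using hpu.trans ⟨2, by ring⟩) hb e
  have h1 := hj.trans h
  rw [one_pow] at hl
  rw [pow_dvd_iff_le_emultiplicity, hl, ← emultiplicity_mul hp.prime,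
    ← pow_dvd_iff_le_emultiplicity] at h1
  have h2 : p ^ j ∣ 2 * (7 * n ^ 2 * e) := by
    refine h1.trans ⟨1, ?_⟩
    rw [Nat.add_sub_cancel_left]
    ring
  refine Nat.Coprime.dvd_of_dvd_mul_left ?_ h2
  exact Nat.Coprime.pow_left _ ((Nat.Prime.coprime_iff_not_dvd Nat.prime_two).mpr hp2).symm

/-- If `a ^ p + b ^ p = C ^ z` with all primes of `C` odd and dividing `a + b`, contradiction. -/
lemma aux_gcd (a b C z p : ℕ) (hp : p.Prime) (hp2 : Odd p) (ha : 3 ≤ a) (hb : 3 ≤ b)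
    (hC : ∀ q : ℕ, q.Prime → q ∣ C → Odd q ∧ q ∣ a + b ∧ ¬ q ∣ a)
    (h : a ^ p + b ^ p = C ^ z) : False := by
  obtain ⟨S, hS⟩ : a + b ∣ a ^ p + b ^ p := hp2.nat_add_dvd_pow_add_pow a b
  have hSd : S ∣ p := by
    rw [Nat.dvd_iff_prime_pow_dvd_dvd]
    intro q j hq hj
    rcases Nat.eq_zero_or_pos j with rfl | hj0
    · simp
    have hqC : q ∣ C := by
      apply hq.dvd_of_dvd_pow (n := z)
      rw [← h, hS]
      exact ((dvd_pow_self q (by omega)).trans hj).mul_left _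
    obtain ⟨o, d, nd⟩ := hC q hq hqC
    have hl := Nat.emultiplicity_pow_add_pow hq o d nd hp2
    rw [hS, emultiplicity_mul hq.prime] at hl
    have hfin : FiniteMultiplicity q (a + b) := by
      rw [Nat.finiteMultiplicity_iff]
      exact ⟨hq.one_lt.ne', by omega⟩
    have hne : emultiplicity q (a + b) ≠ ⊤ := by
      rwa [← finiteMultiplicity_iff_emultiplicity_ne_top]
    have h2 : emultiplicity q S = emultiplicity q p := by
      exact ENat.add_right_injective_of_ne_top hne hl
    rw [pow_dvd_iff_le_emultiplicity] at hj ⊢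
    rwa [← h2]
  have hSle := Nat.le_of_dvd hp.pos hSd
  have h3 : ∀ c : ℕ, 3 ≤ c → p * c < c ^ p := by
    intro c hc
    obtain ⟨w, rfl⟩ : ∃ w, p = w + 1 := ⟨p - 1, by have := hp.pos; omega⟩
    have hw : 2 ≤ w := by
      rcases hp2 with ⟨t, ht⟩
      have := hp.one_lt
      omega
    have : w + 1 < 3 ^ w := by
      clear * - hw
      induction w, hw using Nat.le_induction with
      | base => norm_num
      | succ k hk ih => rw [pow_succ]; omega
    have h4 : w + 1 < c ^ w := this.trans_le (Nat.pow_le_pow_left hc w)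
    rw [pow_succ]
    exact Nat.mul_lt_mul_of_pos_right h4 (by omega)
  have h4 := h3 a ha
  have h5 := h3 b hb
  have h6 : (a + b) * S ≤ (a + b) * p := Nat.mul_le_mul_left _ hSle
  nlinarith

lemma aux_binom (w : ℤ) (u : ℤ) (k : ℕ) : u ^ 2 ∣ (1 + w * u) ^ k - (1 + k * (w * u)) := by
  induction k with
  | zero => simp
  | succ k ih =>
    obtain ⟨c, hc⟩ := ih
    refine ⟨c * (1 + w * u) + k * w ^ 2, ?_⟩
    rw [pow_succ]
    push_cast
    linear_combination (1 + w * u) * hc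

lemma aux_exp : ∀ q : ℕ, 7 ≤ q → (46656 * (q + 1) ^ 2) ^ 2 ≤ 175 ^ (q - 1) := by
  intro q hq
  induction q, hq using Nat.le_induction with
  | base => norm_num
  | succ k hk ih =>
    obtain ⟨w, rfl⟩ : ∃ w, k = w + 1 := ⟨k - 1, by omega⟩
    rw [Nat.add_sub_cancel] at ih ⊢
    rw [pow_succ]
    have h1 : (w + 1 + 1 + 1) ^ 2 ≤ 2 * (w + 1 + 1) ^ 2 := by nlinarith
    calc (46656 * (w + 1 + 1 + 1) ^ 2) ^ 2 ≤ (46656 * (2 * (w + 1 + 1) ^ 2)) ^ 2 := by gcongr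
      _ = 4 * (46656 * (w + 1 + 1) ^ 2) ^ 2 := by ring
      _ ≤ 4 * 175 ^ w := by gcongr
      _ ≤ 175 ^ w * 175 := by nlinarith [Nat.zero_le (175 ^ w)]

/-- The case of bounded exponents, via the table. -/
lemma aux_table (n u x y z : ℕ)
    (hu : u = 7 * n ^ 2) (hu175 : 175 ≤ u) (hx : 0 < x) (hy : 0 < y)
    (hz12 : 12 ≤ z) (hxz : x < z) (hyz : y < z) (hnodd : ¬ 2 ∣ n) (h5 : 5 ∣ n)
    (hmain : (1 + 2 * (u:ℤ)) ^ y - (1 - 5 * (u:ℤ)) ^ x = (7 * (n:ℤ)) ^ z)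
    (hd2 : u ∣ 5 * x + 2 * y) (hsmall : z < 2286144) : False := by
  have huZ : (u:ℤ) = 7 * (n:ℤ) ^ 2 := by exact_mod_cast hu
  have hub := Nat.le_of_dvd (by omega) hd2
  have hnb : n < 1512 := by
    by_contra hge
    have : 1512 * 1512 ≤ n * n := Nat.mul_le_mul (by omega) (by omega)
    have : n ^ 2 = n * n := by ring
    omega
  obtain ⟨t, ht, htn⟩ := relTable_mem (n / 10) (by omega)
  have htn' : t.1 = n := by omega
  have hchk := relTable_check t ht
  obtain ⟨n', k, a, b⟩ := t
  simp only at htn'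
  subst htn'
  simp only [relCheck, Bool.and_eq_true, decide_eq_true_eq] at hchk
  obtain ⟨⟨⟨⟨⟨⟨⟨c1, c2⟩, c3⟩, c4⟩, c5⟩, c6⟩, c7⟩, c8⟩ := hchk
  set M := (7 * n') ^ k with hM
  have m1 := (powModAux_spec 32 (1 + 14 * n' ^ 2) a M c2).mul
    (powModAux_spec 32 (M + 1 - 35 * n' ^ 2) b M c3)
  have m2 : (1 + 14 * n' ^ 2) ^ a * (M + 1 - 35 * n' ^ 2) ^ b ≡ 1 [MOD M] := by
    refine m1.symm.trans ?_
    rw [Nat.ModEq, c1, Nat.mod_eq_of_lt c8]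
  have hMz : ((M:ℕ):ℤ) ∣ (7 * (n':ℤ)) ^ z := by
    have : M ∣ (7 * n') ^ z := pow_dvd_pow _ (by omega)
    exact_mod_cast this
  rw [← ZMod.natCast_eq_natCast_iff] at m2
  have hM35 : ((M + 1 - 35 * n' ^ 2 : ℕ) : ZMod M) = 1 - 5 * (u : ZMod M) := by
    rw [Nat.cast_sub (by omega), hu]
    push_cast
    rw [ZMod.natCast_self]
    ring
  have hβ : ((1 + 14 * n' ^ 2 : ℕ) : ZMod M) = 1 + 2 * (u : ZMod M) := by
    rw [hu]; push_cast; ring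
  rw [Nat.cast_mul, Nat.cast_pow, Nat.cast_pow, hM35, hβ] at m2
  have hrel : (1 + 2 * (u : ZMod M)) ^ y = (1 - 5 * (u : ZMod M)) ^ x := by
    rw [← hmain, ← ZMod.intCast_zmod_eq_zero_iff_dvd] at hMz
    push_cast at hMz
    exact sub_eq_zero.mp hMz
  have hone : (1 + 2 * (u : ZMod M)) ^ (a * x + b * y) = 1 := by
    calc (1 + 2 * (u : ZMod M)) ^ (a * x + b * y)
        = ((1 + 2 * (u : ZMod M)) ^ a) ^ x * ((1 + 2 * (u : ZMod M)) ^ y) ^ b := by ring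
      _ = ((1 + 2 * (u : ZMod M)) ^ a * (1 - 5 * (u : ZMod M)) ^ b) ^ x := by rw [hrel]; ring
      _ = 1 := by rw [m2]; simp
  have hdv : M ∣ (1 + 14 * n' ^ 2) ^ (a * x + b * y) - 1 := by
    rw [← hβ] at hone
    have : (((1 + 14 * n' ^ 2) ^ (a * x + b * y) : ℕ) : ZMod M) = ((1:ℕ) : ZMod M) := by
      push_cast at hone ⊢
      exact hone
    rw [ZMod.natCast_eq_natCast_iff] at this
    exact (Nat.modEq_iff_dvd' (Nat.one_le_pow _ _ (by omega))).mp this.symm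
  have hfin := aux_lte n' k (a * x + b * y) hnodd hdv
  have hpos : 0 < a * x + b * y := by
    rcases Nat.eq_zero_or_pos a with h | h
    · have : 0 < b * y := Nat.mul_pos (by omega) hy
      omega
    · have : 0 < a * x := Nat.mul_pos h hx
      omega
  have hle := Nat.le_of_dvd (Nat.mul_pos (by omega) hpos) hfin
  have h1 : a * x + b * y ≤ (a + b) * 2286144 := by
    rw [add_mul]
    exact add_le_add (Nat.mul_le_mul_left _ (by omega)) (Nat.mul_le_mul_left _ (by omega))
  have h2 : 7 * n' ^ 2 * (a * x + b * y) ≤ 7 * n' ^ 2 * ((a + b) * 2286144) :=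
    Nat.mul_le_mul_left _ h1
  have h3 := hle.trans h2
  exact absurd h3 (not_le.mpr c7)

/-- The case of large exponents. -/
lemma aux_large (n u x y z : ℕ)
    (hu : u = 7 * n ^ 2) (hu175 : 175 ≤ u) (hx : 0 < x) (hy : 0 < y)
    (hxz : x < z) (hyz : y < z) (hzmax : z ≤ 2 * max x y) (hcop : Nat.Coprime x y)
    (hmain : (1 + 2 * (u:ℤ)) ^ y - (1 - 5 * (u:ℤ)) ^ x = (7 * (n:ℤ)) ^ z)
    (hlarge : 2286144 ≤ z) : False := by
  have huZ : (u:ℤ) = 7 * (n:ℤ) ^ 2 := by exact_mod_cast hu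
  set q := Nat.clog u (z ^ 2) with hq
  have hq1 : z ^ 2 ≤ u ^ q := Nat.le_pow_clog (by omega) _
  have hq2 : u ^ q.pred < z ^ 2 := Nat.pow_pred_clog_lt_self (by omega) (by nlinarith)
  have hqz : 46656 * (q + 1) ^ 2 ≤ z := by
    rcases Nat.lt_or_ge q 7 with h7 | h7
    · have : (q + 1) ^ 2 ≤ 7 ^ 2 := Nat.pow_le_pow_left (by omega) 2
      omega
    · have h1 := aux_exp q h7
      have h2 : 175 ^ (q - 1) ≤ u ^ (q - 1) := Nat.pow_le_pow_left hu175 _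
      have h3 : (46656 * (q + 1) ^ 2) ^ 2 < z ^ 2 := by
        rw [Nat.pred_eq_sub_one] at hq2
        omega
      exact (lt_of_pow_lt_pow_left₀ 2 (by omega) h3).le
  have hLz : 24 * (9 * (q + 1)) ≤ max x y := by nlinarith
  refine aux_main u x y z q (9 * (q + 1)) hu175 rfl hx hy hcop hxz.le hyz.le (by nlinarith) hq1
    (le_max_iff.mp hLz) ?_
  rw [hmain]
  have e1 : (u:ℤ) ^ (288 * (9 * (q + 1)) ^ 2) ∣ ((7 * (n:ℤ)) ^ 2) ^ (288 * (9 * (q + 1)) ^ 2) :=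
    pow_dvd_pow_of_dvd ⟨7, by rw [huZ]; ring⟩ _
  rw [← pow_mul] at e1
  exact e1.trans (pow_dvd_pow _ (by nlinarith))

theorem stmt_16 (n : ℕ) (hn : 0 < n) (h5 : 5 ∣ n)
    (x y z : ℕ) (hx : 0 < x) (hy : 0 < y) (hz : 0 < z)
    (heq : (35 * n ^ 2 - 1) ^ x + (14 * n ^ 2 + 1) ^ y = (7 * n) ^ z) :
    x = 1 ∧ y = 1 ∧ z = 2 := by
  have hn5 : 5 ≤ n := Nat.le_of_dvd hn h5
  obtain ⟨A, hA⟩ : ∃ A, A = 35 * n ^ 2 - 1 := ⟨_, rfl⟩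
  obtain ⟨B, hB⟩ : ∃ B, B = 14 * n ^ 2 + 1 := ⟨_, rfl⟩
  have hnn : 5 * n ≤ n ^ 2 := by nlinarith
  have hA1 : A + 1 = 35 * n ^ 2 := by omega
  rw [← hA, ← hB] at heq
  have hAB : A + B = (7 * n) ^ 2 := by
    have : (7 * n) ^ 2 = 49 * n ^ 2 := by ring
    omega
  have hC1 : 1 < 7 * n := by omega
  have hCA : 7 * n ≤ A := by omega
  have hCB : 7 * n ≤ B := by omega
  have hA0 : 0 < A := by omega
  have hB0 : 0 < B := by omega
  have hAx : A ≤ A ^ x := Nat.le_self_pow hx.ne' A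
  have hBy : B ≤ B ^ y := Nat.le_self_pow hy.ne' B
  have hz2 : 2 ≤ z := by
    by_contra hlt
    have : z = 1 := by omega
    subst this
    have : 7 * n < (7 * n) ^ 2 := by nlinarith
    rw [pow_one] at heq
    omega
  rcases Nat.eq_or_lt_of_le hz2 with hz2' | hz3
  · subst hz2'
    have e1 : A ^ x = A ^ 1 := by rw [pow_one]; omega
    have e2 : B ^ y = B ^ 1 := by rw [pow_one]; omega
    exact ⟨Nat.pow_right_injective (by omega) e1, Nat.pow_right_injective (by omega) e2, rfl⟩
  exfalso
  -- size bounds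
  have hxz : x < z := by
    have : (7 * n) ^ x < (7 * n) ^ z := by
      have h1 : (7 * n) ^ x ≤ A ^ x := Nat.pow_le_pow_left hCA x
      omega
    exact (Nat.pow_lt_pow_iff_right hC1).mp this
  have hyz : y < z := by
    have : (7 * n) ^ y < (7 * n) ^ z := by
      have h1 : (7 * n) ^ y ≤ B ^ y := Nat.pow_le_pow_left hCB y
      omega
    exact (Nat.pow_lt_pow_iff_right hC1).mp this
  have hzmax : z ≤ 2 * max x y := by
    set m := max x y with hm
    have h1 : A ^ x ≤ (7 * n) ^ (2 * m) := by
      rw [pow_mul]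
      exact (Nat.pow_le_pow_left (by omega) x).trans
        (Nat.pow_le_pow_right (by positivity) (le_max_left _ _))
    have h2 : B ^ y ≤ (7 * n) ^ (2 * m) := by
      rw [pow_mul]
      exact (Nat.pow_le_pow_left (by omega) y).trans
        (Nat.pow_le_pow_right (by positivity) (le_max_right _ _))
    have h3 : (7 * n) ^ z < (7 * n) ^ (2 * m + 1) := by
      rw [pow_succ]
      have : 0 < (7 * n) ^ (2 * m) := by positivity
      nlinarith
    have := (Nat.pow_lt_pow_iff_right hC1).mp h3
    omega
  -- x is odd
  have hAZ : (A:ℤ) = 35 * (n:ℤ) ^ 2 - 1 := by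
    have : (A:ℤ) + 1 = 35 * (n:ℤ) ^ 2 := by exact_mod_cast hA1
    linarith
  have hBZ : (B:ℤ) = 14 * (n:ℤ) ^ 2 + 1 := by exact_mod_cast hB
  have heqZ : (A:ℤ) ^ x + (B:ℤ) ^ y = (7 * (n:ℤ)) ^ z := by exact_mod_cast heq
  have hxodd : Odd x := by
    rw [← Nat.not_even_iff_odd]
    intro hev
    have e1 : (n:ℤ) ∣ (A:ℤ) ^ x - 1 := by
      have h1 : (n:ℤ) ∣ (A:ℤ) - (-1) := ⟨35 * n, by rw [hAZ]; ring⟩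
      have := h1.trans (sub_dvd_pow_sub_pow _ _ x)
      rwa [hev.neg_one_pow] at this
    have e2 : (n:ℤ) ∣ (B:ℤ) ^ y - 1 := by
      have h1 : (n:ℤ) ∣ (B:ℤ) - 1 := ⟨14 * n, by rw [hBZ]; ring⟩
      simpa using h1.trans (sub_dvd_pow_sub_pow _ _ y)
    have e3 : (n:ℤ) ∣ (7 * (n:ℤ)) ^ z := (Dvd.intro_left _ rfl).trans (dvd_pow_self _ hz.ne')
    have e4 : (n:ℤ) ∣ 2 := by
      have : (2:ℤ) = (7 * (n:ℤ)) ^ z - ((A:ℤ) ^ x - 1) - ((B:ℤ) ^ y - 1) := by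
        rw [← heqZ]; ring
      rw [this]
      exact dvd_sub (dvd_sub e3 e1) e2
    have := Int.le_of_dvd (by norm_num) e4
    omega
  -- the basic equation
  obtain ⟨u, hu⟩ : ∃ u, u = 7 * n ^ 2 := ⟨_, rfl⟩
  have huZ : (u:ℤ) = 7 * (n:ℤ) ^ 2 := by exact_mod_cast hu
  have hu175 : 175 ≤ u := by nlinarith
  have hmain : (1 + 2 * (u:ℤ)) ^ y - (1 - 5 * (u:ℤ)) ^ x = (7 * (n:ℤ)) ^ z := by
    have e1 : (1 - 5 * (u:ℤ)) ^ x = - (A:ℤ) ^ x := by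
      rw [← hxodd.neg_pow]; congr 1; rw [hAZ, huZ]; ring
    have e2 : (1 + 2 * (u:ℤ)) = (B:ℤ) := by rw [hBZ, huZ]; ring
    rw [e1, e2, ← heqZ]; ring
  have hlin : (u:ℤ) ^ 2 ∣ (7 * (n:ℤ)) ^ z - u * (5 * x + 2 * y) := by
    have e1 := aux_binom 2 u y
    have e2 := aux_binom (-5) u x
    have := dvd_sub e1 e2
    have e3 : (7 * (n:ℤ)) ^ z - u * (5 * x + 2 * y) = (1 + 2 * (u:ℤ)) ^ y - (1 + y * (2 * (u:ℤ)))
      - ((1 + (-5) * (u:ℤ)) ^ x - (1 + x * (-5 * (u:ℤ)))) := by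
      rw [← hmain]; ring
    rw [e3]
    exact this
  have hd1 : (7 * n) ∣ 5 * x + 2 * y := by
    have e1 : (u:ℤ) * (7 * n) ∣ (7 * (n:ℤ)) ^ z :=
      Dvd.dvd.trans ⟨7, by rw [huZ]; ring⟩ (pow_dvd_pow (7 * (n:ℤ)) hz3)
    have e2 : (u:ℤ) * (7 * n) ∣ (u:ℤ) ^ 2 := ⟨n, by rw [huZ]; ring⟩
    have e3 : (u:ℤ) * (7 * n) ∣ u * (5 * x + 2 * y) := by
      have := dvd_sub e1 (e2.trans hlin)
      simpa using this
    have e4 := Int.dvd_of_mul_dvd_mul_left (by omega) e3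
    exact_mod_cast e4
  have hd2 : 4 ≤ z → u ∣ 5 * x + 2 * y := by
    intro hz4
    have e1 : (u:ℤ) * u ∣ (7 * (n:ℤ)) ^ z :=
      Dvd.dvd.trans ⟨49, by rw [huZ]; ring⟩ (pow_dvd_pow (7 * (n:ℤ)) hz4)
    have e2 : (u:ℤ) * u ∣ (u:ℤ) ^ 2 := ⟨1, by ring⟩
    have e3 : (u:ℤ) * u ∣ u * (5 * x + 2 * y) := by
      have := dvd_sub e1 (e2.trans hlin)
      simpa using this
    have e4 := Int.dvd_of_mul_dvd_mul_left (by omega) e3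
    exact_mod_cast e4
  have hnodd : ¬ 2 ∣ n := by
    intro h2
    have := (h2.mul_left 7).trans hd1
    rcases hxodd with ⟨t, ht⟩
    omega
  -- z is not tiny
  have hz12 : 12 ≤ z := by
    by_contra hlt
    rcases Nat.lt_or_ge z 4 with h4 | h4
    · have := Nat.le_of_dvd (by omega) hd1
      omega
    · have := Nat.le_of_dvd (by omega) (hd2 h4)
      omega
  -- coprimality
  have hcop : Nat.Coprime x y := by
    by_contra hnc
    obtain ⟨p, hp, hpx, hpy⟩ := Nat.Prime.not_coprime_iff_dvd.mp hnc
    obtain ⟨x', rfl⟩ := hpx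
    obtain ⟨y', rfl⟩ := hpy
    have hpodd : Odd p := (Nat.odd_mul.mp hxodd).1
    have hx'odd : Odd x' := (Nat.odd_mul.mp hxodd).2
    have hx'0 : x' ≠ 0 := by rintro rfl; simp at hx
    have hy'0 : y' ≠ 0 := by rintro rfl; simp at hy
    refine aux_gcd (A ^ x') (B ^ y') (7 * n) z p hp hpodd ?_ ?_ ?_ ?_
    · exact le_trans (by omega) (Nat.le_self_pow hx'0 A)
    · exact le_trans (by omega) (Nat.le_self_pow hy'0 B)
    · intro q hq hqC
      have hqu : q ∣ 7 * n ^ 2 := hqC.trans ⟨n, by ring⟩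
      have hqA : ¬ q ∣ A := by
        intro h
        have h1 : q ∣ A + 1 := by rw [hA1]; exact hqu.trans ⟨5, by ring⟩
        have := (Nat.dvd_add_right h).mp h1
        exact hq.one_lt.ne' (Nat.dvd_one.mp this)
      refine ⟨?_, ?_, fun h => hqA (hq.dvd_of_dvd_pow h)⟩
      · rw [← Nat.not_even_iff_odd, even_iff_two_dvd]
        intro h2
        rcases (Nat.Prime.dvd_mul Nat.prime_two).mp (h2.trans hqC) with h | h
        · omega
        · exact hnodd h
      · have hquZ : (q:ℤ) ∣ 7 * (n:ℤ) ^ 2 := by exact_mod_cast hqu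
        have e1 : (q:ℤ) ∣ (A:ℤ) ^ x' - (-1) := by
          have h1 : (q:ℤ) ∣ (A:ℤ) - (-1) := hquZ.trans ⟨5, by rw [hAZ]; ring⟩
          have := h1.trans (sub_dvd_pow_sub_pow _ _ x')
          rwa [hx'odd.neg_one_pow] at this
        have e2 : (q:ℤ) ∣ (B:ℤ) ^ y' - 1 := by
          have h1 : (q:ℤ) ∣ (B:ℤ) - 1 := hquZ.trans ⟨2, by rw [hBZ]; ring⟩
          simpa using h1.trans (sub_dvd_pow_sub_pow _ _ y')
        have := dvd_add e1 e2
        have e3 : (q:ℤ) ∣ ((A ^ x' + B ^ y' : ℕ) : ℤ) := by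
          push_cast
          have e4 : (A:ℤ) ^ x' + (B:ℤ) ^ y' = ((A:ℤ) ^ x' - (-1)) + ((B:ℤ) ^ y' - 1) := by ring
          rw [e4]
          exact this
        exact_mod_cast e3
    · rw [← pow_mul, ← pow_mul, mul_comm x' p, mul_comm y' p]
      exact heq
  rcases Nat.lt_or_ge z 2286144 with hsmall | hlarge
  · exact aux_table n u x y z hu hu175 hx hy hz12 hxz hyz hnodd h5 hmain (hd2 (by omega)) hsmall
  · exact aux_large n u x y z hu hu175 hx hy hxz hyz hzmax hcop hmain hlarge
end

section
/- Let p be a prime with p > 3 and p ≡ 3 (mod 4), and let n be a positive integer with pn ≡ ±1 (mod 5). If positive integers x, y, z with x = 1 and y ≤ 2 satisfy (5pn² − 1)^x + (p(p−5)n² + 1)^y = (pn)^z, then (x, y, z) = (1, 1, 2). -/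
theorem stmt_17 (p n : ℕ) (hp : p.Prime) (hp3 : 3 < p) (hp4 : p % 4 = 3)
    (hn : 0 < n) (h5 : p * n % 5 = 1 ∨ p * n % 5 = 4)
    (x y z : ℕ) (hx : 0 < x) (hy : 0 < y) (hz : 0 < z)
    (hx1 : x = 1) (hy2 : y ≤ 2)
    (heq : (5 * p * n ^ 2 - 1) ^ x + (p * (p - 5) * n ^ 2 + 1) ^ y = (p * n) ^ z) :
    x = 1 ∧ y = 1 ∧ z = 2 := by
  subst hx1
  obtain ⟨q, rfl⟩ : ∃ q, p = q + 5 := ⟨p - 5, by omega⟩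
  have hpos : 0 < (q + 5) * n ^ 2 := by positivity
  obtain ⟨m, hm⟩ : ∃ m, 5 * (q + 5) * n ^ 2 = m + 1 :=
    ⟨5 * (q + 5) * n ^ 2 - 1, by rw [mul_assoc]; omega⟩
  rw [hm] at heq
  simp only [Nat.add_sub_cancel, pow_one] at heq
  have hq : 0 < q := by omega
  have hbig : 1 < (q + 5) * n := by nlinarith
  interval_cases y
  · refine ⟨rfl, rfl, ?_⟩
    have h : ((q + 5) * n) ^ z = ((q + 5) * n) ^ 2 := by
      rw [← heq]; nlinarith
    exact Nat.pow_right_injective hbig h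
  · exfalso
    have h : (q + 5) * n ^ 2 * (2 * q + 5 + (q + 5) * q ^ 2 * n ^ 2) = ((q + 5) * n) ^ z := by
      rw [← heq]; nlinarith
    obtain _ | _ | k := z
    · omega
    · have h1 : (q + 5) * n * (n * (2 * q + 5 + (q + 5) * q ^ 2 * n ^ 2)) = (q + 5) * n * 1 := by
        rw [zero_add, pow_one] at h
        rw [mul_one]; refine Eq.trans ?_ h; ring
      have h2 := Nat.eq_of_mul_eq_mul_left (by omega) h1
      have h3 := Nat.eq_one_of_mul_eq_one_left h2
      omega
    · have h1 : (q + 5) * n ^ 2 * (2 * q + 5 + (q + 5) * q ^ 2 * n ^ 2)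
          = (q + 5) * n ^ 2 * ((q + 5) * ((q + 5) * n) ^ k) := by
        rw [h]; ring
      have h2 := Nat.eq_of_mul_eq_mul_left hpos h1
      have h3 : (q + 5) ∣ 2 * q + 5 + (q + 5) * q ^ 2 * n ^ 2 := ⟨_, h2⟩
      have h4 : (q + 5) ∣ 2 * q + 5 :=
        (Nat.dvd_add_left (by rw [mul_assoc]; exact dvd_mul_right _ _)).1 h3
      have h5 : (q + 5) ∣ q := by
        have : 2 * q + 5 = (q + 5) + q := by ring
        rw [this] at h4
        exact (Nat.dvd_add_right (dvd_refl _)).1 h4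
      have := Nat.le_of_dvd hq h5
      omega
end
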